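/- Let ρ be a run of a level-2 collapsible pushdown system ending in stack s, let m ∈ genMilestones(s)∖{s} be such that ρ visits m, and let i be maximal such that the stack of ρ(i) is m. Then ρ also visits the ≪-minimal generalised milestone m' ∈ genMilestones(s)∖genMilestones(m), and for i' maximal such that the stack of ρ(i') is m', the subrun ρ↾[i+1,i'] is a loop of m'. -/

import Mathlib

namespace CPG

/-! ## Level-2 collapsible pushdown stacks -/

/-- Stack letters: `Sum.inl σ` is a letter with a level-1 link,
`Sum.inr (σ, k)` is a letter with a level-2 link to the substack of width `k`. -/
abbrev Letter (A : Type) := A ⊕ (A × ℕ)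

def symOf {A : Type} : Letter A → A
  | Sum.inl a => a
  | Sum.inr (a, _) => a

def lvlOf {A : Type} : Letter A → ℕ
  | Sum.inl _ => 1
  | Sum.inr _ => 2

abbrev Word (A : Type) := List (Letter A)

/-- A 2-word: a list of words; the last word is the topmost one. -/
abbrev Stack2 (A : Type) := List (Word A)

/-- The initial level-2 stack `⊥₂`. -/
def bottom2 {A : Type} (bot : A) : Stack2 A := [[Sum.inl bot]]

def top2 {A : Type} (s : Stack2 A) : Option (Word A) := s.getLast?

def top1 {A : Type} (s : Stack2 A) : Option (Letter A) := s.getLast?.bind List.getLast?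

def symS {A : Type} (s : Stack2 A) : Option A := (top1 s).map symOf

def lvlS {A : Type} (s : Stack2 A) : Option ℕ := (top1 s).map lvlOf

def lnkS {A : Type} (s : Stack2 A) : Option ℕ :=
  match top1 s, top2 s with
  | some (Sum.inr (_, j)), _ => some j
  | some (Sum.inl _), some w => some (w.length - 1)
  | _, _ => none

def clone2 {A : Type} (s : Stack2 A) : Option (Stack2 A) :=
  (top2 s).map fun w => s ++ [w]

def push1 {A : Type} [DecidableEq A] (bot a : A) (s : Stack2 A) : Option (Stack2 A) :=
  if a = bot then none else (top2 s).map fun w => s.dropLast ++ [w ++ [Sum.inl a]]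

def push2 {A : Type} [DecidableEq A] (bot a : A) (s : Stack2 A) : Option (Stack2 A) :=
  if a = bot then none else
    (top2 s).map fun w => s.dropLast ++ [w ++ [Sum.inr (a, s.length - 1)]]

def pop2 {A : Type} (s : Stack2 A) : Option (Stack2 A) :=
  if 1 < s.length then some s.dropLast else none

def pop1 {A : Type} (s : Stack2 A) : Option (Stack2 A) :=
  match s.getLast? with
  | some w => if 1 < w.length then some (s.dropLast ++ [w.dropLast]) else none
  | none => none

def collapse {A : Type} (s : Stack2 A) : Option (Stack2 A) :=
  match top1 s with
  | some (Sum.inr (_, k)) => if 0 < k then some (s.take k) else none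
  | some (Sum.inl _) => pop1 s
  | none => none

/-- The level-2 stack operations. -/
inductive Op (A : Type) where
  | clone2 | pop1 | pop2 | collapse
  | push1 (a : A) | push2 (a : A)

def applyOp {A : Type} [DecidableEq A] (bot : A) : Op A → Stack2 A → Option (Stack2 A)
  | .clone2 => clone2
  | .pop1 => pop1
  | .pop2 => pop2
  | .collapse => collapse
  | .push1 a => push1 bot a
  | .push2 a => push2 bot a

/-- `Stacks(Σ)` : the smallest set containing `⊥₂` and closed under the operations. -/
inductive IsStack {A : Type} [DecidableEq A] (bot : A) : Stack2 A → Prop where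
  | base : IsStack bot (bottom2 bot)
  | step {s t : Stack2 A} (op : Op A) : IsStack bot s → applyOp bot op s = some t →
      IsStack bot t

/-- Iterated application of a partial stack operation. -/
def iter {A : Type} (f : Stack2 A → Option (Stack2 A)) : ℕ → Stack2 A → Option (Stack2 A)
  | 0, s => some s
  | n + 1, s => (f s).bind (iter f n)

/-- `t` is a substack of `s`: `t = Pop₁ⁿ(Pop₂ᵐ(s))`. -/
def Substack {A : Type} (t s : Stack2 A) : Prop :=
  ∃ n m, (iter pop2 m s).bind (iter pop1 n) = some t

def ProperSubstack {A : Type} (t s : Stack2 A) : Prop := Substack t s ∧ t ≠ s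

/-- `s` is a prefix of `t` (`s ⊑ t`). -/
def StackPrefix {A : Type} (s t : Stack2 A) : Prop :=
  s ≠ [] ∧ s.length ≤ t.length ∧ s.dropLast <+: t ∧
    ∀ j, s.length - 1 ≤ j → j < t.length → s.getLastD [] <+: t.getD j []

/-- `t[s/u]` : the stack obtained from `t` by replacing the prefix `s` by `u`. -/
def substPrefix {A : Type} (t s u : Stack2 A) : Stack2 A :=
  u.dropLast ++
    (t.drop (s.length - 1)).map fun v => u.getLastD [] ++ v.drop (s.getLastD []).length

/-! ## Collapsible pushdown systems and runs -/

/-- A level-2 collapsible pushdown system. -/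
structure CPS (Q A Γ : Type) where
  bot : A
  q0 : Q
  Δ : Set (Q × A × Γ × Q × Op A)

variable {Q A Γ : Type} [DecidableEq A]

/-- A `γ`-labelled transition realized by the operation `op`. -/
def TransOp (S : CPS Q A Γ) (γ : Γ) (op : Op A) (c c' : Q × Stack2 A) : Prop :=
  ∃ σ : A, symS c.2 = some σ ∧ (c.1, σ, γ, c'.1, op) ∈ S.Δ ∧
    applyOp S.bot op c.2 = some c'.2

def Trans (S : CPS Q A Γ) (γ : Γ) (c c' : Q × Stack2 A) : Prop :=
  ∃ op, TransOp S γ op c c'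

/-- A run of a collapsible pushdown system (recording configurations, labels and
operations of each step). -/
structure Run (S : CPS Q A Γ) where
  len : ℕ
  cfg : ℕ → Q × Stack2 A
  lab : ℕ → Γ
  op : ℕ → Op A
  ok : ∀ i, i < len → TransOp S (lab i) (op i) (cfg i) (cfg (i + 1))

def Run.stk {S : CPS Q A Γ} (ρ : Run S) (i : ℕ) : Stack2 A := (ρ.cfg i).2

/-- The word of labels along a run. -/
def Run.labels {S : CPS Q A Γ} (ρ : Run S) : List Γ :=
  List.ofFn fun i : Fin ρ.len => ρ.lab i

/-- `Reach_L`-reachability: a run from `c` to `c'` labelled by a word in `L`. -/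
def ReachL (S : CPS Q A Γ) (L : Language Γ) (c c' : Q × Stack2 A) : Prop :=
  ∃ ρ : Run S, ρ.cfg 0 = c ∧ ρ.cfg ρ.len = c' ∧ ρ.labels ∈ L

/-- Plain reachability. -/
def Reach (S : CPS Q A Γ) (c c' : Q × Stack2 A) : Prop :=
  ∃ ρ : Run S, ρ.cfg 0 = c ∧ ρ.cfg ρ.len = c'

/-! ## ε-contraction -/

def oneLetterLang (γ : Γ) : Language Γ := {[γ]}

def nonEpsLang (eps : Γ) : Language Γ := {w | ∃ γ : Γ, γ ≠ eps ∧ w = [γ]}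

/-- The language `{ε}*`. -/
def epsStar (eps : Γ) : Language Γ := KStar.kstar (oneLetterLang eps)

/-- The language `({ε}*(Γ∖{ε}))*`. -/
def domLang (eps : Γ) : Language Γ :=
  KStar.kstar (epsStar eps * nonEpsLang eps)

/-- The language `{ε}*γ`. -/
def edgeLang (eps γ : Γ) : Language Γ := epsStar eps * oneLetterLang γ

/-- The vertex set of the ε-contraction `G/ε`. -/
def EpsDomain (S : CPS Q A Γ) (eps : Γ) : Set (Q × Stack2 A) :=
  {c | ReachL S (domLang eps) (S.q0, bottom2 S.bot) c}

/-! ## (Generalised) milestones and the order ≪ -/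

/-- `wordAt bot s i` is the word `wᵢ` of `s`, with the convention `w₀ = ⊥`. -/
def wordAt {A : Type} (bot : A) (s : Stack2 A) (i : ℕ) : Word A :=
  if i = 0 then [Sum.inl bot] else s.getD (i - 1) []

/-- Longest common prefix of two words. -/
def lcp {α : Type} [DecidableEq α] : List α → List α → List α
  | a :: s, b :: t => if a = b then a :: lcp s t else []
  | _, _ => []

/-- `m` is a generalised milestone of `s`. -/
def GenMilestone (bot : A) (s m : Stack2 A) : Prop :=
  ∃ i v, i < s.length ∧ m = s.take i ++ [v] ∧
    lcp (wordAt bot s i) (wordAt bot s (i + 1)) <+: v ∧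
    (v <+: wordAt bot s i ∨ v <+: wordAt bot s (i + 1))

/-- `m` is a milestone of `s`. -/
def Milestone (bot : A) (s m : Stack2 A) : Prop :=
  ∃ i v, i < s.length ∧ m = s.take i ++ [v] ∧
    lcp (wordAt bot s i) (wordAt bot s (i + 1)) <+: v ∧
    v <+: wordAt bot s (i + 1)

def genMilestones (bot : A) (s : Stack2 A) : Set (Stack2 A) := {m | GenMilestone bot s m}

def milestones (bot : A) (s : Stack2 A) : Set (Stack2 A) := {m | Milestone bot s m}

/-- The base cases of the partial order `≪`. -/
def llBase (bot : A) (s t : Stack2 A) : Prop :=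
  s.length < t.length ∨
    (s ≠ [] ∧ s.length = t.length ∧ s.dropLast = t.dropLast ∧
      ((t.getLastD [] <+: s.getLastD [] ∧ t.getLastD [] ≠ s.getLastD [] ∧
          s.getLastD [] <+: wordAt bot s (s.length - 1)) ∨
        (s.getLastD [] <+: t.getLastD [] ∧ s.getLastD [] ≠ t.getLastD [] ∧
          ¬ t.getLastD [] <+: wordAt bot s (s.length - 1))))

/-- The order `≪`: the smallest reflexive transitive relation containing `llBase`. -/
def ll (bot : A) : Stack2 A → Stack2 A → Prop := Relation.ReflTransGen (llBase bot)

/-- `m'` is the ≪-successor of `m` within `genMilestones bot s`. -/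
def LlSuccessor (bot : A) (s m m' : Stack2 A) : Prop :=
  GenMilestone bot s m ∧ GenMilestone bot s m' ∧ m ≠ m' ∧ ll bot m m' ∧
    ∀ m'', GenMilestone bot s m'' → ll bot m m'' → m'' ≠ m → ll bot m' m''

/-! ## Loops, returns and 1-loops -/

/-- The segment `[i,j]` of `ρ` is a loop (of its initial stack). -/
def LoopSeg {S : CPS Q A Γ} (ρ : Run S) (i j : ℕ) : Prop :=
  i ≤ j ∧ j ≤ ρ.len ∧ ρ.stk j = ρ.stk i ∧
    (∀ k, i ≤ k → k ≤ j → ∀ t, pop2 (ρ.stk i) = some t → ¬ Substack (ρ.stk k) t) ∧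
    (∀ k, i ≤ k → k ≤ j → ∀ m, 0 < m → ∀ t, iter pop1 m (ρ.stk i) = some t →
      ρ.stk k = t → ∀ m', m' < m → ∃ t', iter pop1 m' (ρ.stk i) = some t' ∧
        lvlS t' = some 1)

/-- A high loop: a loop that never visits `Pop₁` of its stack. -/
def HighLoopSeg {S : CPS Q A Γ} (ρ : Run S) (i j : ℕ) : Prop :=
  LoopSeg ρ i j ∧ ∀ k, i ≤ k → k ≤ j → ∀ t, pop1 (ρ.stk i) = some t → ρ.stk k ≠ t

/-- A low loop: a loop whose second and second-to-last stacks are `Pop₁` of its stack. -/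
def LowLoopSeg {S : CPS Q A Γ} (ρ : Run S) (i j : ℕ) : Prop :=
  LoopSeg ρ i j ∧ i < j ∧
    ∃ t, pop1 (ρ.stk i) = some t ∧ ρ.stk (i + 1) = t ∧ ρ.stk (j - 1) = t

/-- The common part of the definition of a return on the segment `[i,j]`:
it leads from its initial stack `t` to `Pop₂(t)` and never visits a substack
of `Pop₂(t)` before its final configuration. -/
def RetShell {S : CPS Q A Γ} (ρ : Run S) (i j : ℕ) : Prop :=
  i < j ∧ j ≤ ρ.len ∧ pop2 (ρ.stk i) = some (ρ.stk j) ∧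
    ∀ k, i ≤ k → k < j → ¬ Substack (ρ.stk k) (ρ.stk j)

/-- The segment `[i,j]` of `ρ` is a return (from its initial stack `t` to `Pop₂(t)`). -/
inductive RetSeg {S : CPS Q A Γ} (ρ : Run S) : ℕ → ℕ → Prop where
  | pop2 {i j : ℕ} (h : RetShell ρ i j) (hop : ρ.op (j - 1) = Op.pop2) : RetSeg ρ i j
  | collapse {i j : ℕ} (h : RetShell ρ i j) (hop : ρ.op (j - 1) = Op.collapse)
      (hpre : ∃ w w', top2 (ρ.stk i) = some w ∧ top2 (ρ.stk (j - 1)) = some w' ∧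
        w <+: w' ∧ w ≠ w') : RetSeg ρ i j
  | sub {i k j : ℕ} (h : RetShell ρ i j) (hik : i < k) (hkj : k ≤ j)
      (hpop : pop1 (ρ.stk i) = some (ρ.stk k)) (hret : RetSeg ρ k j) : RetSeg ρ i j

/-- The segment `[i,j]` of `ρ` is a level-1-loop. -/
def OneLoopSeg {S : CPS Q A Γ} (ρ : Run S) (i j : ℕ) : Prop :=
  i ≤ j ∧ j ≤ ρ.len ∧
    ∃ (s : Stack2 A) (w : Word A) (s' : Stack2 A),
      ρ.stk i = s ++ [w] ∧ ρ.stk j = s ++ s' ++ [w] ∧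
      (∀ k, i ≤ k → k ≤ j → s.length < (ρ.stk k).length) ∧
      (∀ k, i ≤ k → k ≤ j → 1 < w.length → top2 (ρ.stk k) = some w.dropLast →
        ∃ m, k < m ∧ m ≤ j ∧ RetSeg ρ k m)

/-! ## ExRet, ExLoop, ... -/

/-- `w↓₀` : replace every level-2 link by `0`. -/
def down0 {A : Type} : Word A → Word A :=
  List.map fun a => match a with
    | Sum.inl x => Sum.inl x
    | Sum.inr (x, _) => Sum.inr (x, 0)

def ExRet (S : CPS Q A Γ) (w : Word A) : Set (Q × Q) :=
  {p | ∃ ρ : Run S, ρ.cfg 0 = (p.1, [down0 w, down0 w]) ∧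
    ρ.cfg ρ.len = (p.2, [down0 w]) ∧ RetSeg ρ 0 ρ.len}

def ExLoop (S : CPS Q A Γ) (w : Word A) : Set (Q × Q) :=
  {p | ∃ ρ : Run S, ρ.cfg 0 = (p.1, [down0 w]) ∧ ρ.cfg ρ.len = (p.2, [down0 w]) ∧
    LoopSeg ρ 0 ρ.len}

def ExHLoop (S : CPS Q A Γ) (w : Word A) : Set (Q × Q) :=
  {p | ∃ ρ : Run S, ρ.cfg 0 = (p.1, [down0 w]) ∧ ρ.cfg ρ.len = (p.2, [down0 w]) ∧
    HighLoopSeg ρ 0 ρ.len}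

def ExLLoop (S : CPS Q A Γ) (w : Word A) : Set (Q × Q) :=
  {p | ∃ ρ : Run S, ρ.cfg 0 = (p.1, [down0 w]) ∧ ρ.cfg ρ.len = (p.2, [down0 w]) ∧
    LowLoopSeg ρ 0 ρ.len}

def ExOneLoop (S : CPS Q A Γ) (w : Word A) : Set (Q × Q) :=
  {p | ∃ (ρ : Run S) (s' : Stack2 A), ρ.cfg 0 = (p.1, [down0 w]) ∧
    ρ.cfg ρ.len = (p.2, s' ++ [down0 w]) ∧ OneLoopSeg ρ 0 ρ.len}

/-! ## Finite binary trees -/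

/-- Finite binary trees with labels in `α` and optional left/right children. -/
inductive PTree (α : Type) where
  | node (a : α) (l r : Option (PTree α)) : PTree α

/-- The label of the node at address `d` (`false` = left/0, `true` = right/1). -/
def PTree.labelAt {α : Type} : PTree α → List Bool → Option α
  | .node a _ _, [] => some a
  | .node _ (some t) _, false :: d => t.labelAt d
  | .node _ none _, false :: _ => none
  | .node _ _ (some t), true :: d => t.labelAt d
  | .node _ _ none, true :: _ => none

def PTree.map {α β : Type} (f : α → β) : PTree α → PTree β
  | .node a l r =>
    .node (f a)
      (match l with | none => none | some t => some (t.map f))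
      (match r with | none => none | some t => some (t.map f))

/-- Convolution of two trees, with `none` as padding symbol `□`. -/
def PTree.conv {α β : Type} : PTree α → PTree β → PTree (Option α × Option β)
  | .node a l r, .node b l' r' =>
    .node (some a, some b)
      (match l, l' with
        | none, none => none
        | some t, none => some (t.map fun x => (some x, none))
        | none, some u => some (u.map fun x => (none, some x))
        | some t, some u => some (PTree.conv t u))
      (match r, r' with
        | none, none => none
        | some t, none => some (t.map fun x => (some x, none))
        | none, some u => some (u.map fun x => (none, some x))
        | some t, some u => some (PTree.conv t u))

/-- A (bottom-up nondeterministic) finite tree automaton. -/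
structure TreeAut (α : Type) where
  St : Type
  fin : Finite St
  qI : St
  F : Set St
  Δ : Set (St × α × St × St)

/-- Acceptance of a finite tree by a tree automaton. -/
def TreeAut.Accepts {α : Type} (M : TreeAut α) (t : PTree α) : Prop :=
  ∃ ρ : List Bool → M.St,
    (∀ d, t.labelAt d = none → ρ d = M.qI) ∧
    (∀ d a, t.labelAt d = some a → (ρ d, a, ρ (d ++ [false]), ρ (d ++ [true])) ∈ M.Δ) ∧
    ρ [] ∈ M.F

/-- A family of binary relations on `B` is tree-automatic. -/
def IsTreeAutomatic {B : Type} {I : Type} (E : I → B → B → Prop) : Prop :=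
  ∃ (α : Type) (_ : Finite α) (AB : TreeAut α) (AE : I → TreeAut (Option α × Option α))
    (f : {t : PTree α // AB.Accepts t} → B),
    Function.Bijective f ∧
      ∀ (i : I) (t₁ t₂ : {t : PTree α // AB.Accepts t}),
        (AE i).Accepts (PTree.conv t₁.1 t₂.1) ↔ E i (f t₁) (f t₂)

/-! ## The encoding of configurations as trees -/

/-- Labels of encoding trees: a state, a pair (symbol, link level), or `ε`. -/
abbrev EncLabel (Q A : Type) := Q ⊕ ((A × ℕ) ⊕ Unit)

def epsLab {Q A : Type} : EncLabel Q A := Sum.inr (Sum.inr ())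

def symLab {Q A : Type} (τ : Letter A) : EncLabel Q A := Sum.inr (Sum.inl (symOf τ, lvlOf τ))

/-- Encoding of blocklines as trees (with a fuel parameter driving the recursion;
the fuel used in `encStack` is large enough so that it never runs out on actual
blocklines). The left subtree encodes the blockline induced by the first maximal
block, the right subtree the remaining blocks. -/
def encBL (Q : Type) {A : Type} [DecidableEq A] :
    ℕ → EncLabel Q A → List (Word A) → PTree (EncLabel Q A)
  | 0, σ, _ => .node σ none none
  | _ + 1, σ, [] => .node σ none none
  | fuel + 1, σ, w :: rest =>
    if w.length ≤ 1 then
      match rest with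
      | [] => .node σ none none
      | _ :: _ => .node σ none (some (encBL Q fuel epsLab rest))
    else
      let p : Word A → Bool := fun v => decide (v.take 2 = w.take 2)
      let blk := (w :: rest).takeWhile p
      let restBlk := (w :: rest).dropWhile p
      .node σ
        (some (encBL Q fuel
          (match w[1]? with | some τ' => symLab τ' | none => epsLab)
          (blk.map List.tail)))
        (match restBlk with
          | [] => none
          | _ :: _ => some (encBL Q fuel epsLab restBlk))

/-- The total number of letters of a 2-word. -/
def size2 {A : Type} (s : Stack2 A) : ℕ := (s.map List.length).sum

/-- The encoding `Enc(s) = Enc(s, (⊥,1))` of a stack. -/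
def encStack (Q : Type) {A : Type} [DecidableEq A] (bot : A) (s : Stack2 A) :
    PTree (EncLabel Q A) :=
  encBL Q (size2 s + 1) (Sum.inr (Sum.inl (bot, 1))) s

/-- The encoding of a configuration: the state at the root, `Enc(s)` as left subtree. -/
def Enc {Q A : Type} [DecidableEq A] (bot : A) (c : Q × Stack2 A) : PTree (EncLabel Q A) :=
  .node (Sum.inl c.1) (some (encStack Q bot c.2)) none

/-- The class `EncTrees` of encoding trees. -/
def EncTrees (Q A : Type) (bot : A) : Set (PTree (EncLabel Q A)) :=
  {T | (∃ q : Q, T.labelAt [] = some (Sum.inl q)) ∧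
    T.labelAt [true] = none ∧ T.labelAt [false] ≠ none ∧
    T.labelAt [false] = some (Sum.inr (Sum.inl (bot, 1))) ∧
    (∀ (d : List Bool) (x : EncLabel Q A),
      T.labelAt (false :: (d ++ [false])) = some x →
        ∃ (σ : A) (l : ℕ), σ ≠ bot ∧ (l = 1 ∨ l = 2) ∧ x = Sum.inr (Sum.inl (σ, l))) ∧
    (∀ (d : List Bool) (x : EncLabel Q A), T.labelAt (d ++ [true]) = some x → x = epsLab) ∧
    (∀ (d : List Bool) (σ : A), ¬ (T.labelAt (d ++ [false]) = some (Sum.inr (Sum.inl (σ, 1))) ∧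
      T.labelAt (d ++ [true, false]) = some (Sum.inr (Sum.inl (σ, 1)))))}

/-- Restriction of a tree to the nodes lexicographically ≤ `d`. -/
def restrictLex {α : Type} : PTree α → List Bool → PTree α
  | .node a _ _, [] => .node a none none
  | .node a l _, false :: d =>
      .node a (match l with | none => none | some t => some (restrictLex t d)) none
  | .node a l r, true :: d =>
      .node a l (match r with | none => none | some t => some (restrictLex t d))

/-- The lexicographic order on tree addresses. -/
def lexLe (d e : List Bool) : Prop :=
  d <+: e ∨ ∃ (c x y : List Bool), d = c ++ false :: x ∧ e = c ++ true :: y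

/-! ## Deterministic finite automata with output (Moore machines) -/

structure Moore (α ω : Type) where
  St : Type
  fin : Finite St
  init : St
  step : St → α → St
  out : St → ω

def Moore.output {α ω : Type} (M : Moore α ω) (w : List α) : ω :=
  M.out (w.foldl M.step M.init)

/-!
The stacks form a tree with root `⊥₂`, in which one descends from a stack by cloning its topmost
word, then popping letters while the topmost word stays a prefix of the word below it, and then
pushing the letters on which it differs from that word. The generalised milestones of a stack `s`
are exactly the ancestors of `s`, so the `≪`-minimal generalised milestone `m'` of `s` that is not
one of `m` is the child of `m` towards `s`. Every stack operation leads to a child or to an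
ancestor. Hence a run enters the subtree below `m'` only by stepping from `m` to `m'`; after its
last visit to `m` the run does so at once and never leaves this subtree again.

Between two visits to `m'` all stacks are thus at least as wide as `m'`. When such a stack is
obtained from `m'` by popping letters of level 2, the topmost word of `m'` is a prefix of the word
below it, so the links of these letters lead below that word, whereas letters pushed later to
restore `m'` have links to the width of that word.
-/

theorem exists_not_and_succ_of_le {P : ℕ → Prop} {a b : ℕ} (hab : a ≤ b) (ha : ¬ P a)
    (hb : P b) : ∃ j, a ≤ j ∧ j < b ∧ ¬ P j ∧ P (j + 1) := by
  induction hab with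
  | refl => exact absurd hb ha
  | @step b hab ih =>
    by_cases h : P b
    · obtain ⟨j, hj, hjb, hPj⟩ := ih h
      exact ⟨j, hj, hjb.trans b.lt_succ_self, hPj⟩
    · exact ⟨b, hab, b.lt_succ_self, h, hb⟩

section Words

variable {α : Type}

theorem not_concat_prefix_self (v : List α) (x : α) : ¬ v ++ [x] <+: v := fun h =>
  absurd h.length_le (by simp)

theorem concat_eq_concat_of_prefix {u v : List α} {x y : α} (hx : v ++ [x] <+: u)
    (hy : v ++ [y] <+: u) : v ++ [x] = v ++ [y] :=
  (List.prefix_of_prefix_length_le hx hy (by simp)).eq_of_length (by simp)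

variable [DecidableEq α]

theorem prefix_lcp_iff {v u w : List α} :
    v <+: lcp u w ↔ v <+: u ∧ v <+: w := by
  induction v generalizing u w with
  | nil => simp
  | cons x v ih =>
    cases u <;> cases w <;> grind [lcp]

theorem lcp_prefix_left (u w : List α) : lcp u w <+: u :=
  (prefix_lcp_iff.1 (List.prefix_refl _)).1

theorem lcp_prefix_right (u w : List α) : lcp u w <+: w :=
  (prefix_lcp_iff.1 (List.prefix_refl _)).2

/-- `v` lies on the path from `u` to `w` in the tree of words ordered by prefix, the path that
descends from `u` to `lcp u w` and then ascends to `w`. -/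
def OnPrefixPath (u w v : List α) : Prop :=
  lcp u w <+: v ∧ (v <+: u ∨ v <+: w)

theorem OnPrefixPath.trans {u w v x : List α} (hv : OnPrefixPath u w v)
    (hx : OnPrefixPath u v x) : OnPrefixPath u w x :=
  ⟨(prefix_lcp_iff.2 ⟨lcp_prefix_left u w, hv.1⟩).trans hx.1,
    hx.2.elim Or.inl fun hxv => hv.2.imp hxv.trans hxv.trans⟩

theorem onPrefixPath_right (u w : List α) : OnPrefixPath u w w :=
  ⟨lcp_prefix_right u w, Or.inr (List.prefix_refl w)⟩

theorem onPrefixPath_concat_of_prefix {u v : List α} {x : α}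
    (h : v ++ [x] <+: u) : OnPrefixPath u v (v ++ [x]) :=
  ⟨(lcp_prefix_right u v).trans (List.prefix_append v [x]), Or.inl h⟩

theorem onPrefixPath_of_not_concat_prefix {u v : List α} {x : α}
    (h : ¬ v ++ [x] <+: u) : OnPrefixPath u (v ++ [x]) v := by
  refine ⟨(List.prefix_concat_iff.1 (lcp_prefix_right u (v ++ [x]))).resolve_left fun h' => ?_,
    Or.inr (List.prefix_append v [x])⟩
  exact h (h' ▸ lcp_prefix_left u (v ++ [x]))

end Words

section GenMilestone

variable {A : Type} {bot : A}

theorem wordAt_append (r t : Stack2 A) {i : ℕ} (hi : i ≤ r.length) :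
    wordAt bot (r ++ t) i = wordAt bot r i := by
  unfold wordAt
  split
  · rfl
  · rw [List.getD_append]
    omega

/-- The word `w_k` of a 2-word `r` of width `k`, so that the empty 2-word has topmost word
`w₀ = ⊥`. -/
def topWord (bot : A) (r : Stack2 A) : Word A := wordAt bot r r.length

theorem topWord_concat (r : Stack2 A) (w : Word A) : topWord bot (r ++ [w]) = w := by
  simp [topWord, wordAt]

variable [DecidableEq A] {r s t m n : Stack2 A} {w : Word A}

theorem genMilestone_concat_iff : GenMilestone bot (r ++ [w]) m ↔
    GenMilestone bot r m ∨ ∃ v, m = r ++ [v] ∧ OnPrefixPath (topWord bot r) w v := by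
  have path_of_lt {i : ℕ} (hi : i < r.length) (v : Word A) :
      OnPrefixPath (wordAt bot (r ++ [w]) i) (wordAt bot (r ++ [w]) (i + 1)) v ↔
        OnPrefixPath (wordAt bot r i) (wordAt bot r (i + 1)) v := by
    rw [wordAt_append _ _ hi.le, wordAt_append _ _ hi]
  have path_top (v : Word A) :
      OnPrefixPath (wordAt bot (r ++ [w]) r.length) (wordAt bot (r ++ [w]) (r.length + 1)) v ↔
        OnPrefixPath (topWord bot r) w v := by
    rw [wordAt_append _ _ le_rfl, topWord, show wordAt bot (r ++ [w]) (r.length + 1) = w by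
      simp [wordAt]]
  constructor
  · rintro ⟨i, v, hi, rfl, hv⟩
    rw [List.length_append, List.length_singleton, Nat.lt_succ_iff] at hi
    rcases hi.lt_or_eq with hlt | rfl
    · exact Or.inl ⟨i, v, hlt, by rw [List.take_append_of_le_length hi], (path_of_lt hlt v).1 hv⟩
    · exact Or.inr ⟨v, by rw [List.take_left' rfl], (path_top v).1 hv⟩
  · rintro (⟨i, v, hi, rfl, hv⟩ | ⟨v, rfl, hv⟩)
    · exact ⟨i, v, by simp; omega, by rw [List.take_append_of_le_length hi.le],
        (path_of_lt hi v).2 hv⟩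
    · exact ⟨r.length, v, by simp, by rw [List.take_left' rfl], (path_top v).2 hv⟩

theorem not_genMilestone_nil (m : Stack2 A) : ¬ GenMilestone bot [] m := by
  rintro ⟨i, v, hi, -⟩
  exact absurd hi (Nat.not_lt_zero i)

theorem GenMilestone.ne_nil (h : GenMilestone bot s m) : s ≠ [] := by
  rintro rfl
  exact not_genMilestone_nil m h

theorem GenMilestone.ne_nil_right (h : GenMilestone bot s m) : m ≠ [] := by
  obtain ⟨i, v, -, rfl, -⟩ := h
  simp

theorem GenMilestone.length_le (h : GenMilestone bot s m) : m.length ≤ s.length := by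
  obtain ⟨i, v, hi, rfl, -⟩ := h
  simp only [List.length_append, List.length_take, List.length_singleton]
  omega

theorem genMilestone_concat_concat_iff {v : Word A} :
    GenMilestone bot (r ++ [w]) (r ++ [v]) ↔ OnPrefixPath (topWord bot r) w v := by
  rw [genMilestone_concat_iff]
  refine ⟨?_, fun h => Or.inr ⟨v, rfl, h⟩⟩
  rintro (h | ⟨v', hv', h⟩)
  · simpa using h.length_le
  · simp_all

theorem GenMilestone.refl (hs : s ≠ []) : GenMilestone bot s s := by
  rw [← List.dropLast_concat_getLast hs, genMilestone_concat_concat_iff]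
  exact onPrefixPath_right _ _

theorem GenMilestone.trans (hm : GenMilestone bot s m) (hn : GenMilestone bot m n) :
    GenMilestone bot s n := by
  induction s using List.reverseRecOn with
  | nil => exact absurd hm (not_genMilestone_nil m)
  | append_singleton r w ih =>
    rw [genMilestone_concat_iff] at hm ⊢
    rcases hm with hm | ⟨v, rfl, hv⟩
    · exact Or.inl (ih hm)
    · exact (genMilestone_concat_iff.1 hn).imp_right fun ⟨u, hu, huv⟩ => ⟨u, hu, hv.trans huv⟩

theorem genMilestone_take (ht : t ≠ []) {k : ℕ} (hk : 0 < k) : GenMilestone bot t (t.take k) := by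
  induction t using List.reverseRecOn with
  | nil => exact absurd rfl ht
  | append_singleton r w ih =>
    rcases Nat.lt_or_ge r.length k with hrk | hkr
    · rw [List.take_of_length_le (by simpa using hrk)]
      exact GenMilestone.refl ht
    · rw [List.take_append_of_le_length hkr, genMilestone_concat_iff]
      exact Or.inl (ih (List.ne_nil_of_length_pos (hk.trans_le hkr)))

end GenMilestone

section Parent

variable {A : Type} {bot : A}

/-- `Parent bot t n` says that `t` is the parent of `n` in the tree of stacks whose root is `⊥₂`
and in which the path to `n` performs only those operations that lead to stacks never left again:
clone the topmost word, pop it down to its common prefix with the next word, and push the rest. -/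
inductive Parent (bot : A) : Stack2 A → Stack2 A → Prop where
  | pop (r : Stack2 A) (v : Word A) (x : Letter A) (h : v ++ [x] <+: topWord bot r) :
      Parent bot (r ++ [v ++ [x]]) (r ++ [v])
  | push (r : Stack2 A) (v : Word A) (x : Letter A) (h : ¬ v ++ [x] <+: topWord bot r) :
      Parent bot (r ++ [v]) (r ++ [v ++ [x]])
  | clone (r : Stack2 A) (h : r ≠ []) : Parent bot r (r ++ [topWord bot r])

theorem Parent.ne_nil_left {t n : Stack2 A} (h : Parent bot t n) : t ≠ [] := by
  cases h <;> simp [*]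

theorem Parent.ne_nil_right {t n : Stack2 A} (h : Parent bot t n) : n ≠ [] := by
  cases h <;> simp

theorem Parent.cases_concat {t r : Stack2 A} {v : Word A} (h : Parent bot t (r ++ [v])) :
    (∃ x, v ++ [x] <+: topWord bot r ∧ t = r ++ [v ++ [x]]) ∨
      (¬ v <+: topWord bot r ∧ t = r ++ [v.dropLast]) ∨ (v = topWord bot r ∧ t = r) := by
  generalize hn : r ++ [v] = n at h
  cases h <;> obtain ⟨rfl, ⟨⟩⟩ := List.append_inj' hn rfl
  case pop x hx => exact Or.inl ⟨x, hx, rfl⟩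
  case push x hx => exact Or.inr (Or.inl ⟨hx, by rw [List.dropLast_concat]⟩)
  case clone => exact Or.inr (Or.inr ⟨rfl, rfl⟩)

theorem Parent.unique {t t' n : Stack2 A} (h : Parent bot t n) (h' : Parent bot t' n) :
    t = t' := by
  obtain ⟨r, v, rfl⟩ := n.eq_nil_or_concat'.resolve_left h.ne_nil_right
  rcases h.cases_concat with ⟨x, hx, rfl⟩ | ⟨hv, rfl⟩ | ⟨hv, rfl⟩ <;>
    rcases h'.cases_concat with ⟨y, hy, rfl⟩ | ⟨hv', rfl⟩ | ⟨hv', rfl⟩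
  · rw [concat_eq_concat_of_prefix hx hy]
  · exact absurd ((List.prefix_append v [x]).trans hx) hv'
  · exact absurd (hv' ▸ hx) (not_concat_prefix_self v x)
  · exact absurd ((List.prefix_append v [y]).trans hy) hv
  · rfl
  · exact absurd (hv' ▸ List.prefix_refl v) hv
  · exact absurd (hv ▸ hy) (not_concat_prefix_self v y)
  · exact absurd (hv ▸ List.prefix_refl v) hv'
  · rfl

theorem Parent.llBase {t n : Stack2 A} (h : Parent bot t n) : llBase bot t n := by
  cases h with
  | pop r v x h =>
    refine Or.inr ⟨by simp, by simp, by simp, Or.inl ?_⟩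
    rw [wordAt_append _ _ (by simp)]
    simpa [topWord] using h
  | push r v x h =>
    refine Or.inr ⟨by simp, by simp, by simp, Or.inr ?_⟩
    rw [wordAt_append _ _ (by simp)]
    simpa [topWord] using h
  | clone _ h => exact Or.inl (by simp)

theorem reflTransGen_parent_pop (r : Stack2 A) {u v : Word A} (huv : u <+: v)
    (hv : v <+: topWord bot r) : Relation.ReflTransGen (Parent bot) (r ++ [v]) (r ++ [u]) := by
  obtain ⟨z, rfl⟩ := huv
  induction z using List.reverseRecOn with
  | nil => rw [List.append_nil]
  | append_singleton z x ih =>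
    rw [← List.append_assoc] at hv ⊢
    exact (ih ((List.prefix_append _ _).trans hv)).head (Parent.pop r (u ++ z) x hv)

variable [DecidableEq A] {s t m n : Stack2 A}

theorem Parent.genMilestone (h : Parent bot t n) : GenMilestone bot n t := by
  cases h with
  | pop r v x h => exact genMilestone_concat_concat_iff.2 (onPrefixPath_concat_of_prefix h)
  | push r v x h => exact genMilestone_concat_concat_iff.2 (onPrefixPath_of_not_concat_prefix h)
  | clone _ h => exact genMilestone_concat_iff.2 (Or.inl (GenMilestone.refl h))

theorem Parent.not_genMilestone (h : Parent bot t n) : ¬ GenMilestone bot t n := by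
  cases h with
  | pop r v x h =>
    rw [genMilestone_concat_concat_iff]
    rintro ⟨hlcp, -⟩
    simpa using ((prefix_lcp_iff.2 ⟨h, List.prefix_refl _⟩).trans hlcp).length_le
  | push r v x h =>
    rw [genMilestone_concat_concat_iff]
    rintro ⟨-, hx | hx⟩
    · exact h hx
    · simpa using hx.length_le
  | clone _ h =>
    intro hg
    simpa using hg.length_le

theorem reflTransGen_parent_push (r : Stack2 A) {u w : Word A} (huw : u <+: w)
    (hu : lcp (topWord bot r) w <+: u) :
    Relation.ReflTransGen (Parent bot) (r ++ [u]) (r ++ [w]) := by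
  obtain ⟨z, rfl⟩ := huw
  induction z using List.reverseRecOn with
  | nil => rw [List.append_nil]
  | append_singleton z x ih =>
    rw [← List.append_assoc] at hu ⊢
    refine (ih ?_).tail (Parent.push r (u ++ z) x fun h => ?_)
    · exact (prefix_lcp_iff.2 ⟨lcp_prefix_left _ _,
        (lcp_prefix_right _ _).trans (List.prefix_append _ _)⟩).trans hu
    · have hlen := ((prefix_lcp_iff.2 ⟨h, List.prefix_refl _⟩).trans hu).length_le
      simp at hlen

theorem OnPrefixPath.reflTransGen_parent {r : Stack2 A} {w v : Word A}
    (h : OnPrefixPath (topWord bot r) w v) :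
    Relation.ReflTransGen (Parent bot) (r ++ [v]) (r ++ [w]) := by
  obtain ⟨hlcp, hv | hv⟩ := h
  · exact (reflTransGen_parent_pop r hlcp hv).trans
      (reflTransGen_parent_push r (lcp_prefix_right _ _) (List.prefix_refl _))
  · exact reflTransGen_parent_push r hv hlcp

theorem GenMilestone.reflTransGen_parent (h : GenMilestone bot s m) :
    Relation.ReflTransGen (Parent bot) m s := by
  induction s using List.reverseRecOn with
  | nil => exact absurd h (not_genMilestone_nil m)
  | append_singleton r w ih =>
    rcases genMilestone_concat_iff.1 h with hr | ⟨v, rfl, hv⟩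
    · have hpath : OnPrefixPath (topWord bot r) w (topWord bot r) :=
        ⟨lcp_prefix_left _ _, Or.inl (List.prefix_refl _)⟩
      exact ((ih hr).tail (Parent.clone r hr.ne_nil)).trans hpath.reflTransGen_parent
    · exact hv.reflTransGen_parent

theorem genMilestone_iff_reflTransGen_parent (hs : s ≠ []) :
    GenMilestone bot s m ↔ Relation.ReflTransGen (Parent bot) m s := by
  refine ⟨GenMilestone.reflTransGen_parent, fun h => ?_⟩
  induction h using Relation.ReflTransGen.head_induction_on with
  | refl => exact GenMilestone.refl hs
  | head h _ ih => exact ih.trans h.genMilestone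

theorem GenMilestone.ll (h : GenMilestone bot s m) : ll bot m s :=
  Relation.ReflTransGen.mono (fun _ _ => Parent.llBase) _ _ h.reflTransGen_parent

theorem GenMilestone.exists_child (h : GenMilestone bot s m) (hms : m ≠ s) :
    ∃ m', Parent bot m m' ∧ GenMilestone bot s m' := by
  rcases h.reflTransGen_parent.cases_head with rfl | ⟨m', hmm', hm's⟩
  · exact absurd rfl hms
  · exact ⟨m', hmm', (genMilestone_iff_reflTransGen_parent h.ne_nil).2 hm's⟩

theorem GenMilestone.eq_or_of_parent (hm : GenMilestone bot n m) (ht : Parent bot t n) :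
    m = n ∨ GenMilestone bot t m := by
  rcases hm.reflTransGen_parent.cases_tail with rfl | ⟨t', hmt', ht'⟩
  · exact Or.inl rfl
  · rw [ht'.unique ht] at hmt'
    exact Or.inr ((genMilestone_iff_reflTransGen_parent ht.ne_nil_left).2 hmt')

theorem GenMilestone.total {m' : Stack2 A} (h : GenMilestone bot s m) (h' : GenMilestone bot s m') :
    GenMilestone bot m m' ∨ GenMilestone bot m' m := by
  rw [genMilestone_iff_reflTransGen_parent h.ne_nil_right,
    genMilestone_iff_reflTransGen_parent h'.ne_nil_right]
  have unique : Relator.RightUnique (Function.swap (Parent bot)) := fun _ _ _ => Parent.unique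
  exact (Relation.ReflTransGen.total_of_right_unique unique
    (Relation.reflTransGen_swap.2 h.reflTransGen_parent)
    (Relation.reflTransGen_swap.2 h'.reflTransGen_parent)).imp
    Relation.reflTransGen_swap.1 Relation.reflTransGen_swap.1

theorem Parent.ll_of_not_genMilestone {m' m'' : Stack2 A} (h : Parent bot m m')
    (hm' : GenMilestone bot s m') (hm'' : GenMilestone bot s m'')
    (hmm'' : ¬ GenMilestone bot m m'') : ll bot m' m'' := by
  rcases hm'.total hm'' with hle | hge
  · rw [(hle.eq_or_of_parent h).resolve_right hmm'']
    exact Relation.ReflTransGen.refl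
  · exact hge.ll

end Parent

section StackStep

variable {A : Type}

/-- Normal form of a stack operation: pops of level 2 and collapses along links of level 2 both
cut a 2-word down to a nonempty prefix. -/
inductive StackStep : Stack2 A → Stack2 A → Prop where
  | clone (r : Stack2 A) (w : Word A) : StackStep (r ++ [w]) (r ++ [w] ++ [w])
  | take (t : Stack2 A) (k : ℕ) (ht : t ≠ []) (hk : 0 < k) : StackStep t (t.take k)
  | pop (r : Stack2 A) (v : Word A) (x : Letter A) : StackStep (r ++ [v ++ [x]]) (r ++ [v])
  | push (r : Stack2 A) (v : Word A) (x : Letter A)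
      (hx : ∀ a l, x = Sum.inr (a, l) → l = r.length) :
      StackStep (r ++ [v]) (r ++ [v ++ [x]])

theorem pop1_concat (r : Stack2 A) (w : Word A) :
    pop1 (r ++ [w]) = if 1 < w.length then some (r ++ [w.dropLast]) else none := by
  simp [pop1]

theorem StackStep.of_pop1 {t t' : Stack2 A} (h : pop1 t = some t') : StackStep t t' := by
  obtain rfl | ⟨r, w, rfl⟩ := t.eq_nil_or_concat'
  · simp [pop1] at h
  · rw [pop1_concat, Option.ite_none_right_eq_some] at h
    obtain ⟨hw, ⟨⟩⟩ := h
    obtain rfl | ⟨v, x, rfl⟩ := w.eq_nil_or_concat'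
    · simp at hw
    · simpa using StackStep.pop r v x

theorem StackStep.of_applyOp [DecidableEq A] {bot : A} {op : Op A} {t t' : Stack2 A}
    (h : applyOp bot op t = some t') : StackStep t t' := by
  obtain rfl | ⟨r, w, rfl⟩ := t.eq_nil_or_concat'
  · cases op <;> simp [applyOp, clone2, pop1, pop2, collapse, push1, push2, top1, top2] at h
  have take {k : ℕ} (hk : 0 < k) : StackStep (r ++ [w]) ((r ++ [w]).take k) :=
    StackStep.take _ k (by simp) hk
  cases op with
  | clone2 =>
    obtain rfl : r ++ [w] ++ [w] = t' := by simpa [applyOp, clone2, top2] using h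
    exact StackStep.clone r w
  | pop1 => exact StackStep.of_pop1 h
  | pop2 =>
    obtain ⟨hr, rfl⟩ : 0 < r.length ∧ r = t' := by
      simpa [applyOp, pop2, List.length_pos_iff] using h
    simpa using take hr
  | collapse =>
    rw [applyOp, collapse] at h
    split at h
    · rw [Option.ite_none_right_eq_some] at h
      obtain ⟨hk, ⟨⟩⟩ := h
      exact take hk
    · exact StackStep.of_pop1 h
    · cases h
  | push1 a =>
    obtain ⟨-, rfl⟩ : a ≠ bot ∧ r ++ [w ++ [Sum.inl a]] = t' := by
      simpa [applyOp, push1, top2] using h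
    exact StackStep.push r w _ (by simp)
  | push2 a =>
    obtain ⟨-, rfl⟩ : a ≠ bot ∧ r ++ [w ++ [Sum.inr (a, r.length)]] = t' := by
      simpa [applyOp, push2, top2] using h
    exact StackStep.push r w _ (by simp)

theorem Run.stackStep {Q Γ : Type} [DecidableEq A] {S : CPS Q A Γ} (ρ : Run S) {k : ℕ}
    (hk : k < ρ.len) : StackStep (ρ.stk k) (ρ.stk (k + 1)) :=
  let ⟨_, _, _, h⟩ := ρ.ok k hk
  StackStep.of_applyOp h

theorem StackStep.parent_or_genMilestone [DecidableEq A] {bot : A} {t t' : Stack2 A}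
    (h : StackStep t t') : Parent bot t t' ∨ GenMilestone bot t t' := by
  cases h with
  | clone r w => exact Or.inl (by simpa [topWord_concat] using Parent.clone (r ++ [w]) (by simp))
  | take _ k ht hk => exact Or.inr (genMilestone_take ht hk)
  | pop r v x =>
    refine (em (v ++ [x] <+: topWord bot r)).imp (Parent.pop r v x) fun h => ?_
    exact genMilestone_concat_concat_iff.2 (onPrefixPath_of_not_concat_prefix h)
  | push r v x =>
    refine (em (v ++ [x] <+: topWord bot r)).symm.imp (Parent.push r v x) fun h => ?_
    exact genMilestone_concat_concat_iff.2 (onPrefixPath_concat_of_prefix h)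

theorem StackStep.eq_and_eq_of_enter [DecidableEq A] {bot : A} {t t' m m' : Stack2 A}
    (h : StackStep t t') (hm : Parent bot m m') (ht : ¬ GenMilestone bot t m')
    (ht' : GenMilestone bot t' m') : t = m ∧ t' = m' := by
  rcases h.parent_or_genMilestone (bot := bot) with hpar | hgm
  · obtain rfl := (ht'.eq_or_of_parent hpar).resolve_right ht
    exact ⟨hpar.unique hm, rfl⟩
  · exact absurd (hgm.trans ht') ht

end StackStep

section LastVisit

variable {Q A Γ : Type} [DecidableEq A] {S : CPS Q A Γ} {ρ : Run S} {m m' : Stack2 A}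

theorem Run.exists_enter {i j : ℕ} (hij : i ≤ j) (hj : j ≤ ρ.len)
    (hm : Parent S.bot m m') (hi : ¬ GenMilestone S.bot (ρ.stk i) m')
    (hjm' : GenMilestone S.bot (ρ.stk j) m') :
    ∃ k, i ≤ k ∧ k < j ∧ ρ.stk k = m ∧ ρ.stk (k + 1) = m' := by
  obtain ⟨k, hik, hkj, hk, hk'⟩ :=
    exists_not_and_succ_of_le (P := fun k => GenMilestone S.bot (ρ.stk k) m') hij hi hjm'
  exact ⟨k, hik, hkj, (ρ.stackStep (hkj.trans_le hj)).eq_and_eq_of_enter hm hk hk'⟩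

theorem Run.enter_of_last_visit (hm : Parent S.bot m m')
    (hlast : GenMilestone S.bot (ρ.stk ρ.len) m') {i : ℕ} (hi : i ≤ ρ.len)
    (hstk : ρ.stk i = m) (hmax : ∀ j, j ≤ ρ.len → ρ.stk j = m → j ≤ i) :
    i < ρ.len ∧ ρ.stk (i + 1) = m' ∧
      ∀ k, i < k → k ≤ ρ.len → GenMilestone S.bot (ρ.stk k) m' := by
  obtain ⟨j, hij, hj, hjm, hjm'⟩ :=
    Run.exists_enter hi le_rfl hm (hstk ▸ hm.not_genMilestone) hlast
  obtain rfl : j = i := (hmax j hj.le hjm).antisymm hij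
  refine ⟨hj, hjm', fun k hjk hk => by_contra fun hkm' => ?_⟩
  obtain ⟨l, hkl, hl, hlm, -⟩ := Run.exists_enter hk le_rfl hm hkm' hlast
  exact (hjk.trans_le hkl).not_ge (hmax l hl.le hlm)

theorem Run.exists_last_visit (ρ : Run S) {i : ℕ} (hi : i ≤ ρ.len) :
    ∃ j, i ≤ j ∧ j ≤ ρ.len ∧ ρ.stk j = ρ.stk i ∧
      ∀ k, k ≤ ρ.len → ρ.stk k = ρ.stk i → k ≤ j := by
  classical
  exact ⟨Nat.findGreatest (fun j => ρ.stk j = ρ.stk i) ρ.len, Nat.le_findGreatest hi rfl,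
    Nat.findGreatest_le _, Nat.findGreatest_spec (P := fun j => ρ.stk j = ρ.stk i) hi rfl,
    fun _ hk h => Nat.le_findGreatest hk h⟩

end LastVisit

section Links

variable {A : Type} {bot : A} {r s t t' m : Stack2 A} {w : Word A}

/-- Every level-2 link in a word leads to a width smaller than the index of that word (which is one
more than the number of words below it). -/
def LinksBounded (s : Stack2 A) : Prop :=
  ∀ ⦃r w⦄, r ++ [w] <+: s → ∀ ⦃a l⦄, Sum.inr (a, l) ∈ w → l ≤ r.length

theorem LinksBounded.of_prefix (hs : LinksBounded s) (h : t <+: s) : LinksBounded t :=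
  fun _ _ hr => hs (hr.trans h)

theorem linksBounded_concat_iff : LinksBounded (r ++ [w]) ↔
    LinksBounded r ∧ ∀ a l, Sum.inr (a, l) ∈ w → l ≤ r.length := by
  refine ⟨fun h => ⟨h.of_prefix (List.prefix_append r [w]), h (List.prefix_refl _)⟩, ?_⟩
  rintro ⟨hr, hw⟩ r' w' h
  rcases List.prefix_concat_iff.1 h with h | h
  · obtain ⟨rfl, ⟨⟩⟩ := List.append_inj' h rfl
    exact hw
  · exact hr h

theorem LinksBounded.lt_of_mem_topWord (h : LinksBounded r) {a : A} {l : ℕ}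
    (hl : Sum.inr (a, l) ∈ topWord bot r) : l < r.length := by
  obtain rfl | ⟨r, w, rfl⟩ := r.eq_nil_or_concat'
  · simp [topWord, wordAt] at hl
  · rw [topWord_concat] at hl
    simpa [Nat.lt_succ_iff] using (linksBounded_concat_iff.1 h).2 a l hl

theorem LinksBounded.of_stackStep (ht : LinksBounded t) (h : StackStep t t') :
    LinksBounded t' := by
  cases h with
  | clone r w =>
    refine linksBounded_concat_iff.2 ⟨ht, fun a l hl => ?_⟩
    exact ((linksBounded_concat_iff.1 ht).2 a l hl).trans (by simp)
  | take _ k => exact ht.of_prefix (List.take_prefix k t)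
  | pop r v x =>
    rw [linksBounded_concat_iff] at ht ⊢
    exact ⟨ht.1, fun a l hl => ht.2 a l (List.mem_append_left _ hl)⟩
  | push r v x hx =>
    rw [linksBounded_concat_iff] at ht ⊢
    refine ⟨ht.1, fun a l hl => ?_⟩
    rcases List.mem_append.1 hl with hl | hl
    · exact ht.2 a l hl
    · exact (hx a l (List.mem_singleton.1 hl).symm).le

variable [DecidableEq A]

theorem IsStack.linksBounded (h : IsStack bot s) : LinksBounded s := by
  induction h with
  | base => exact linksBounded_concat_iff (r := []).2 ⟨by simp [LinksBounded], by simp⟩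
  | step op _ hop ih => exact ih.of_stackStep (StackStep.of_applyOp hop)

theorem LinksBounded.of_genMilestone (hs : LinksBounded s) (h : GenMilestone bot s m) :
    LinksBounded m := by
  induction s using List.reverseRecOn with
  | nil => exact absurd h (not_genMilestone_nil m)
  | append_singleton r w ih =>
    have hs' := linksBounded_concat_iff.1 hs
    rcases genMilestone_concat_iff.1 h with hr | ⟨v, rfl, -, hv⟩
    · exact ih hs'.1 hr
    · refine linksBounded_concat_iff.2 ⟨hs'.1, fun a l hl => ?_⟩
      rcases hv with hv | hv
      · exact (hs'.1.lt_of_mem_topWord (hv.subset hl)).le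
      · exact hs'.2 a l (hv.subset hl)

end Links

section Loop

variable {A : Type}

theorem length_le_of_iter {f : Stack2 A → Option (Stack2 A)}
    (hf : ∀ s t, f s = some t → t.length ≤ s.length) {n : ℕ} {s t : Stack2 A}
    (h : iter f n s = some t) : t.length ≤ s.length := by
  induction n generalizing s with
  | zero => exact (Option.some.inj h ▸ le_rfl)
  | succ n ih =>
    obtain ⟨u, hu, hut⟩ := Option.bind_eq_some_iff.1 h
    exact (ih hut).trans (hf s u hu)

theorem pop2_eq_some_iff {s t : Stack2 A} : pop2 s = some t ↔ 1 < s.length ∧ s.dropLast = t := by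
  simp [pop2]

theorem length_le_of_pop1 {s t : Stack2 A} (h : pop1 s = some t) : t.length ≤ s.length := by
  obtain rfl | ⟨r, w, rfl⟩ := s.eq_nil_or_concat'
  · simp [pop1] at h
  · rw [pop1_concat, Option.ite_none_right_eq_some] at h
    obtain ⟨-, ⟨⟩⟩ := h
    simp

theorem Substack.length_le {s t : Stack2 A} (h : Substack t s) : t.length ≤ s.length := by
  obtain ⟨n, k, h⟩ := h
  obtain ⟨u, hu, hut⟩ := Option.bind_eq_some_iff.1 h
  refine (length_le_of_iter (fun _ _ => length_le_of_pop1) hut).trans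
    (length_le_of_iter (fun s t hst => ?_) hu)
  obtain ⟨-, rfl⟩ := pop2_eq_some_iff.1 hst
  simp

theorem iter_pop1_concat_eq_some_iff {r t : Stack2 A} {w : Word A} {n : ℕ} :
    iter pop1 n (r ++ [w]) = some t ↔
      (n = 0 ∨ n < w.length) ∧ t = r ++ [w.take (w.length - n)] := by
  induction n generalizing w with
  | zero => simp [iter, eq_comm]
  | succ n ih =>
    rw [iter, pop1_concat]
    split
    · rw [Option.bind_some, ih, List.length_dropLast, List.dropLast_eq_take, List.take_take]
      grind
    · grind

theorem lvlS_concat_take (r : Stack2 A) {w : Word A} {q : ℕ} (hq : q < w.length) :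
    lvlS (r ++ [w.take (q + 1)]) = some (lvlOf w[q]) := by
  rw [lvlS, top1, List.getLast?_concat, Option.bind_some, ← List.take_append_getElem hq,
    List.getLast?_concat]
  rfl

/-- The letter of a 2-word at index `q` of the word with index `p`, both counted from zero; it
serves to follow a fixed position of the stack along a run. -/
def letterAt (t : Stack2 A) (p q : ℕ) : Option (Letter A) := t[p]?.bind (·[q]?)

theorem letterAt_concat (r : Stack2 A) (w : Word A) (q : ℕ) :
    letterAt (r ++ [w]) r.length q = w[q]? := by
  simp [letterAt]

theorem StackStep.letterAt_or_eq {t t' : Stack2 A} (h : StackStep t t') {p q l : ℕ} {a : A}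
    (hp : p < t.length) (hl : letterAt t' p q = some (Sum.inr (a, l))) :
    letterAt t p q = some (Sum.inr (a, l)) ∨ l = p := by
  cases h <;> grind [letterAt]

theorem Run.letterAt_or_eq {Q Γ : Type} [DecidableEq A] {S : CPS Q A Γ} {ρ : Run S} {i j : ℕ}
    (hij : i ≤ j) (hj : j ≤ ρ.len) {p q l : ℕ} {a : A}
    (hp : ∀ k, i ≤ k → k ≤ j → p < (ρ.stk k).length)
    (hl : letterAt (ρ.stk j) p q = some (Sum.inr (a, l))) :
    letterAt (ρ.stk i) p q = some (Sum.inr (a, l)) ∨ l = p := by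
  by_contra! h
  obtain ⟨k, hik, hkj, hk, hk'⟩ := exists_not_and_succ_of_le
    (P := fun k => letterAt (ρ.stk k) p q = some (Sum.inr (a, l))) hij h.1 hl
  exact ((ρ.stackStep (hkj.trans_le hj)).letterAt_or_eq (hp k hik hkj.le) hk').elim hk h.2

theorem Run.lvlOf_getElem_eq_one {Q Γ : Type} [DecidableEq A] {S : CPS Q A Γ} {ρ : Run S}
    {i j : ℕ} (hij : i ≤ j) (hj : j ≤ ρ.len) {r : Stack2 A} {w : Word A} {n q : ℕ}
    (hi : ρ.stk i = r ++ [w.take n]) (hjw : ρ.stk j = r ++ [w]) (hr : LinksBounded r)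
    (hgm : ∀ k, i ≤ k → k ≤ j → GenMilestone S.bot (ρ.stk k) (r ++ [w])) (hnq : n ≤ q)
    (hq : q < w.length) : lvlOf w[q] = 1 := by
  rcases hx : w[q] with a | ⟨a, l⟩
  · rfl
  exfalso
  have hlt : l < r.length := by
    have hpath := hgm i le_rfl hij
    rw [hi, genMilestone_concat_concat_iff] at hpath
    have hw : w <+: topWord S.bot r := hpath.2.resolve_right fun hw => by
      have := hw.length_le
      grind
    exact hr.lt_of_mem_topWord (hw.subset (hx ▸ List.getElem_mem hq))
  have hlen : ∀ k, i ≤ k → k ≤ j → r.length < (ρ.stk k).length := fun k hik hkj => by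
    simpa using (hgm k hik hkj).length_le
  have hl : letterAt (ρ.stk j) r.length q = some (Sum.inr (a, l)) := by
    rw [hjw, letterAt_concat, List.getElem?_eq_getElem hq, hx]
  rcases Run.letterAt_or_eq hij hj hlen hl with h | h
  · simp [hi, letterAt_concat, hnq.not_gt] at h
  · exact hlt.ne h

theorem loopSeg_of_forall_genMilestone {Q Γ : Type} [DecidableEq A] {S : CPS Q A Γ} {ρ : Run S}
    {i j : ℕ} (hij : i ≤ j) (hj : j ≤ ρ.len) (heq : ρ.stk j = ρ.stk i)
    (hlinks : LinksBounded (ρ.stk i))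
    (hgm : ∀ k, i ≤ k → k ≤ j → GenMilestone S.bot (ρ.stk k) (ρ.stk i)) : LoopSeg ρ i j := by
  refine ⟨hij, hj, heq, fun k hik hkj t ht hsub => ?_, fun k hik hkj n hn t ht hkt n' hn' => ?_⟩
  · obtain ⟨hlen, rfl⟩ := pop2_eq_some_iff.1 ht
    have := (hgm k hik hkj).length_le.trans hsub.length_le
    rw [List.length_dropLast] at this
    omega
  · obtain ⟨r, w, hrw⟩ := (ρ.stk i).eq_nil_or_concat'.resolve_left (hgm i le_rfl hij).ne_nil
    rw [hrw] at ht heq hlinks hgm ⊢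
    obtain ⟨hnw, rfl⟩ := iter_pop1_concat_eq_some_iff.1 ht
    refine ⟨_, iter_pop1_concat_eq_some_iff.2 ⟨Or.inr (by omega), rfl⟩, ?_⟩
    have hq : w.length - n' - 1 < w.length := by omega
    rw [show w.length - n' = w.length - n' - 1 + 1 by omega, lvlS_concat_take r hq,
      Run.lvlOf_getElem_eq_one hkj hj hkt heq (linksBounded_concat_iff.1 hlinks).1
        (fun k' hkk' => hgm k' (hik.trans hkk')) (by omega) hq]

end Loop

/-- If a run `ρ` ending in stack `s` visits a generalised milestone
`m ≠ s` of `s` for the last time at position `i`, then `ρ` also visits the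
`≪`-minimal generalised milestone `m' ∈ genMilestones(s)∖genMilestones(m)`, and
`ρ↾[i+1,i']` is a loop of `m'` for `i'` the last occurrence of `m'`. -/
theorem run_visits_next_generalised_milestone
    {Q A Γ : Type} [DecidableEq A] (S : CPS Q A Γ) (ρ : Run S)
    (s m : Stack2 A) (hs : IsStack S.bot s) (hlast : ρ.stk ρ.len = s)
    (hm : GenMilestone S.bot s m) (hms : m ≠ s)
    (i : ℕ) (hi : i ≤ ρ.len) (hstk : ρ.stk i = m)
    (hmax : ∀ j, j ≤ ρ.len → ρ.stk j = m → j ≤ i) :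
    ∃ m', (GenMilestone S.bot s m' ∧ ¬ GenMilestone S.bot m m' ∧
        ∀ m'', GenMilestone S.bot s m'' → ¬ GenMilestone S.bot m m'' →
          ll S.bot m' m'') ∧
      ∃ i', i + 1 ≤ i' ∧ i' ≤ ρ.len ∧ ρ.stk i' = m' ∧
        (∀ j, j ≤ ρ.len → ρ.stk j = m' → j ≤ i') ∧
        LoopSeg ρ (i + 1) i' := by
  obtain ⟨m', hmm', hsm'⟩ := hm.exists_child hms
  obtain ⟨hlen, hnext, hstay⟩ := Run.enter_of_last_visit hmm' (hlast ▸ hsm') hi hstk hmax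
  obtain ⟨i', hii', hi', heq, hmax'⟩ := ρ.exists_last_visit hlen
  have hlinks : LinksBounded m' := hs.linksBounded.of_genMilestone hsm'
  have hloop : LoopSeg ρ (i + 1) i' := loopSeg_of_forall_genMilestone hii' hi' heq
    (hnext ▸ hlinks) fun k hk hki' => hnext ▸ hstay k hk (hki'.trans hi')
  rw [hnext] at heq hmax'
  exact ⟨m', ⟨hsm', hmm'.not_genMilestone, fun _ => hmm'.ll_of_not_genMilestone hsm'⟩,
    i', hii', hi', heq, hmax', hloop⟩

end CPG
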